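/- In a finitary binary balanced oriented matroid every edge is contained in a positive circuit: if (M, O, O*) is a finitary binary oriented matroid that is balanced, then for every ground-set element e there is a positive signed circuit C ∈ O with e ∈ dom(C). -/

import Mathlib

open Set Function

variable {α : Type*}

/-- A circuit of a matroid `M`: a minimal dependent set. A cocircuit of `M` is a
circuit of the dual matroid `M✶`. -/
def Matroid.IsCircuitOf (M : Matroid α) (C : Set α) : Prop := Minimal M.Dep C

/-- A signed set, encoded as an integer-valued function taking values `1` or `-1` on its
support (which plays the role of the domain of the signed set) and `0` elsewhere. -/
def IsSignedSet (g : α → ℤ) : Prop := ∀ e ∈ Function.support g, g e = 1 ∨ g e = -1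

/-- A signed set is positive if it is constantly `+1` on its domain. -/
def IsPositive (g : α → ℤ) : Prop := ∀ e ∈ Function.support g, g e = 1

/-- `O` is a signature of the set-system `𝒞`: it consists of exactly two signings of each
member of `𝒞`, these two being negatives of each other, and nothing else. -/
structure IsSignature (𝒞 : Set (Set α)) (O : Set (α → ℤ)) : Prop where
  signed : ∀ g ∈ O, IsSignedSet g
  dom_mem : ∀ g ∈ O, Function.support g ∈ 𝒞
  exists_signing : ∀ C ∈ 𝒞, ∃ g ∈ O, Function.support g = C
  neg_mem : ∀ g ∈ O, -g ∈ O
  eq_or_eq_neg : ∀ g ∈ O, ∀ h ∈ O, Function.support g = Function.support h → h = g ∨ h = -g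

/-- `(M, O, Ostar)` is an oriented matroid: `O` is a signature of the circuits of `M`,
`Ostar` is a signature of the cocircuits of `M`, and orthogonality holds: whenever the
domains of `C ∈ O` and `D ∈ Ostar` intersect, the restriction of `C` to the (finite)
intersection is neither equal to, nor the negative of, the restriction of `D`. -/
structure IsOrientation (M : Matroid α) (O Ostar : Set (α → ℤ)) : Prop where
  circuit_signature : IsSignature {C | M.IsCircuitOf C} O
  cocircuit_signature : IsSignature {D | M✶.IsCircuitOf D} Ostar
  orthogonality : ∀ C ∈ O, ∀ D ∈ Ostar,
    (Function.support C ∩ Function.support D).Nonempty →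
      (¬ ∀ e ∈ Function.support C ∩ Function.support D, C e = D e) ∧
      (¬ ∀ e ∈ Function.support C ∩ Function.support D, C e = - D e)

/-- The oriented matroid is binary: `∑_{e ∈ dom C ∩ dom D} C(e)·D(e) = 0` for every
signed circuit `C ∈ O` and signed cocircuit `D ∈ Ostar` (a finite sum, since circuits
of a finitary matroid are finite). -/
def IsBinaryOrientation (O Ostar : Set (α → ℤ)) : Prop :=
  ∀ C ∈ O, ∀ D ∈ Ostar, ∑ᶠ e, C e * D e = 0

/-- The oriented matroid is balanced: in every signed cocircuit, the set of positive
elements and the set of negative elements have the same cardinality. -/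
def IsBalanced (Ostar : Set (α → ℤ)) : Prop :=
  ∀ D ∈ Ostar, Cardinal.mk {e : α | D e = 1} = Cardinal.mk {e : α | D e = -1}

/-!
If `e` lies in no positive circuit, contract a maximal set `Z` such that this remains true in
`M ／ Z`; it exists by Zorn's lemma, circuits being finite. Maximality gives, for every other `x`
outside `Z`, a signed circuit `C` that is positive at `e`, negative at `x` and nonnegative elsewhere
outside `Z`. If `C` contained a third element outside `Z`, then Minty's painting lemma, applied with
only finitely many elements painted positive, would give a signed cocircuit avoiding `Z` whose
pairing with `C` is at least `1 - 1 + 1`, contradicting the binary condition. So `e` and `x` form a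
signed circuit `(+, -)` of `M ／ Z`, and orthogonality makes every cocircuit of `M ／ Z` through `e`
positive up to sign. A balanced oriented matroid has no positive cocircuit.
-/

theorem sum_le_finsum_of_nonneg_of_notMem {R : Type*} [AddCommMonoid R] [PartialOrder R]
    [IsOrderedAddMonoid R] {f : α → R} (hf : (support f).Finite) {s : Finset α}
    (h : ∀ x ∉ s, 0 ≤ f x) : ∑ x ∈ s, f x ≤ ∑ᶠ x, f x := by
  classical
  rw [finsum_eq_sum_of_support_subset (s := hf.toFinset ∪ s) f (by simp)]
  exact Finset.sum_le_sum_of_subset_of_nonneg Finset.subset_union_right fun x _ hx ↦ h x hx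

open scoped Matroid in
theorem exists_isCircuit_or_exists_isCocircuit {M : Matroid α} {e : α} {Y : Set α}
    (he : e ∈ M.E) (heY : e ∉ Y) :
    (∃ C ⊆ insert e Y, M.IsCircuit C ∧ e ∈ C) ∨ ∃ K, M.IsCocircuit K ∧ Disjoint K Y ∧ e ∈ K := by
  by_cases hcl : e ∈ M.closure Y
  · exact .inl ((M.mem_closure_iff_exists_isCircuit heY).1 hcl)
  · have hnl : (M ／ Y).IsNonloop e := M.contract_isNonloop_iff.2 ⟨he, hcl⟩
    obtain ⟨K, hK, heK⟩ := hnl.exists_mem_isCocircuit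
    obtain ⟨hKM, hKY⟩ := Matroid.contract_isCocircuit_iff.1 hK
    exact .inr ⟨K, hKM, hKY, heK⟩

theorem IsSignedSet.eq_neg_one_or_eq_zero_or_eq_one {g : α → ℤ} (hg : IsSignedSet g) (x : α) :
    g x = -1 ∨ g x = 0 ∨ g x = 1 := by
  have := hg x
  rw [mem_support] at this
  tauto

theorem IsSignature.exists_eq_one {𝒞 : Set (Set α)} {O : Set (α → ℤ)} (hO : IsSignature 𝒞 O)
    {C : Set α} (hC : C ∈ 𝒞) {e : α} (he : e ∈ C) : ∃ g ∈ O, support g = C ∧ g e = 1 := by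
  obtain ⟨g, hg, rfl⟩ := hO.exists_signing C hC
  rcases hO.signed g hg e he with h | h
  · exact ⟨g, hg, rfl, h⟩
  · exact ⟨-g, hO.neg_mem g hg, support_neg g, by simp [h]⟩

theorem IsBalanced.not_isPositive {Ostar : Set (α → ℤ)} (hbal : IsBalanced Ostar) {D : α → ℤ}
    (hD : D ∈ Ostar) {e : α} (he : e ∈ support D) : ¬ IsPositive D := by
  intro hpos
  have hneg : {x | D x = -1} = ∅ :=
    eq_empty_of_forall_notMem fun x (hx : D x = -1) ↦ by
      have := hpos x (by simp [hx])
      omega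
  have hcard := hbal D hD
  rw [hneg, Cardinal.mk_eq_zero (∅ : Set α), Cardinal.mk_set_eq_zero_iff] at hcard
  exact hcard.subset (hpos e he)

namespace IsOrientation

variable {M : Matroid α} {O Ostar : Set (α → ℤ)} {e f : α} {Y : Set α}

theorem finite_support [M.Finitary] (hor : IsOrientation M O Ostar) {C : α → ℤ} (hC : C ∈ O) :
    (support C).Finite :=
  Matroid.IsCircuit.finite (hor.circuit_signature.dom_mem C hC)

theorem mul_neg_of_forall_ne_nonneg (hor : IsOrientation M O Ostar) {C D : α → ℤ} (hC : C ∈ O)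
    (hD : D ∈ Ostar) (he : 0 < C e * D e) (hne : ∀ x ≠ f, 0 ≤ C x * D x) : C f * D f < 0 := by
  by_contra! hf
  have hnonneg : ∀ x, 0 ≤ C x * D x := fun x ↦ by
    rcases eq_or_ne x f with rfl | hxf
    exacts [hf, hne x hxf]
  refine (hor.orthogonality C hC D hD
    ⟨e, left_ne_zero_of_mul he.ne', right_ne_zero_of_mul he.ne'⟩).1 fun x ⟨hCx, hDx⟩ ↦ ?_
  have hx := hnonneg x
  rcases hor.circuit_signature.signed C hC x hCx with h | h <;>
    rcases hor.cocircuit_signature.signed D hD x hDx with h' | h' <;>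
    rw [h, h'] at hx ⊢ <;> omega

theorem exists_circuit_or_cocircuit (hor : IsOrientation M O Ostar) (he : e ∈ M.E) (heY : e ∉ Y) :
    (∃ C ∈ O, C e = 1 ∧ support C ⊆ insert e Y) ∨
      ∃ D ∈ Ostar, D e = 1 ∧ ∀ x ∈ Y, D x = 0 := by
  rcases exists_isCircuit_or_exists_isCocircuit he heY with ⟨K, hKY, hK, heK⟩ | ⟨K, hK, hKY, heK⟩
  · obtain ⟨C, hC, rfl, hCe⟩ := hor.circuit_signature.exists_eq_one hK heK
    exact .inl ⟨C, hC, hCe, hKY⟩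
  · obtain ⟨D, hD, rfl, hDe⟩ := hor.cocircuit_signature.exists_eq_one hK heK
    exact .inr ⟨D, hD, hDe, fun x hx ↦ notMem_support.1 (hKY.notMem_of_mem_right hx)⟩

/-- Minty's painting lemma, by induction on the number of elements painted positive. The elements of
`Y` may be used with any sign by the circuit only, and those outside `insert e (Y ∪ P)` by the
cocircuit only. -/
theorem exists_circuit_or_cocircuit_nonneg (hor : IsOrientation M O Ostar) (he : e ∈ M.E)
    (P : Finset α) (heY : e ∉ Y) :
    (∃ C ∈ O, C e = 1 ∧ (∀ x ∉ Y, 0 ≤ C x) ∧ support C ⊆ insert e (Y ∪ P)) ∨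
      ∃ D ∈ Ostar, D e = 1 ∧ (∀ x ∈ Y, D x = 0) ∧ ∀ x ∈ P, 0 ≤ D x := by
  classical
  induction P using Finset.induction_on generalizing Y with
  | empty =>
    refine (hor.exists_circuit_or_cocircuit he heY).imp ?_ (by simp)
    rintro ⟨C, hC, hCe, hCY⟩
    refine ⟨C, hC, hCe, fun x hx ↦ ?_, by simpa using hCY⟩
    by_contra hCx
    obtain rfl := (hCY fun h ↦ hCx h.ge).resolve_right hx
    omega
  | insert f P _ ih =>
    rcases ih heY with ⟨C, hC, hCe, hCpos, hCP⟩ | ⟨D, hD, hDe, hDY, hDP⟩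
    · exact .inl ⟨C, hC, hCe, hCpos, hCP.trans (by gcongr; simp)⟩
    rcases le_or_gt 0 (D f) with hDf | hDf
    · exact .inr ⟨D, hD, hDe, hDY, by simpa using ⟨hDf, hDP⟩⟩
    have hef : e ≠ f := by
      rintro rfl
      omega
    rcases ih (Y := insert f Y) (by simp [hef, heY]) with
      ⟨C, hC, hCe, hCpos, hCP⟩ | ⟨D', hD', hDe', hDY', hDP'⟩
    · have hprod : C f * D f < 0 := by
        refine hor.mul_neg_of_forall_ne_nonneg hC hD (e := e) (by simp [hCe, hDe]) fun x hxf ↦ ?_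
        by_contra! hx
        have hxY : x ∉ Y := fun h ↦ by simp [hDY x h] at hx
        have hDx : 0 ≤ D x := by
          rcases hCP (left_ne_zero_of_mul hx.ne) with rfl | (h | h) | h
          exacts [hDe ▸ zero_le_one, absurd h hxf, absurd h hxY, hDP x h]
        exact hx.not_ge (mul_nonneg (hCpos x (by simp [hxf, hxY])) hDx)
      refine .inl ⟨C, hC, hCe, fun x hx ↦ ?_, hCP.trans (by simp [insert_union, union_insert])⟩
      rcases eq_or_ne x f with rfl | hxf
      · exact (pos_of_mul_neg_left hprod hDf.le).le
      · exact hCpos x (by simp [hxf, hx])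
    · refine .inr ⟨D', hD', hDe', fun x hx ↦ hDY' x (.inr hx), ?_⟩
      simpa using ⟨(hDY' f (.inl rfl)).ge, hDP'⟩

end IsOrientation

/-- The element `e` lies in no positive circuit of the contraction `M ／ Z`, where `O` is the set of
signed circuits of `M`. Circuits of `M ／ Z` are encoded by circuits of `M`, whose values on `Z` are
ignored. -/
structure IsAcyclicAt (O : Set (α → ℤ)) (e : α) (Z : Set α) : Prop where
  notMem : e ∉ Z
  exists_neg : ∀ C ∈ O, C e = 1 → ∃ x ∉ Z, C x < 0

namespace IsAcyclicAt

variable {M : Matroid α} {O Ostar : Set (α → ℤ)} {e x : α} {Z : Set α}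

protected theorem sUnion {c : Set (Set α)} (hfin : ∀ C ∈ O, (support C).Finite) (hne : c.Nonempty)
    (hchain : IsChain (· ⊆ ·) c) (hc : ∀ Z ∈ c, IsAcyclicAt O e Z) : IsAcyclicAt O e (⋃₀ c) := by
  refine ⟨fun ⟨Z, hZ, heZ⟩ ↦ (hc Z hZ).notMem heZ, fun C hC hCe ↦ ?_⟩
  by_contra! hnonneg
  have hneg : {x | C x < 0}.Finite := (hfin C hC).subset fun x (hx : C x < 0) ↦ hx.ne
  obtain ⟨Z, hZ, hCZ⟩ := hchain.directedOn.exists_mem_subset_of_finite_of_subset_sUnion hne hneg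
    fun x (hx : C x < 0) ↦ by_contra fun h ↦ (hnonneg x h).not_gt hx
  obtain ⟨x, hxZ, hCx⟩ := (hc Z hZ).exists_neg C hC hCe
  exact hxZ (hCZ hCx)

theorem exists_maximal (hfin : ∀ C ∈ O, (support C).Finite) (hZ : IsAcyclicAt O e Z) :
    ∃ Z', Maximal (IsAcyclicAt O e) Z' := by
  obtain ⟨Z', -, hZ'⟩ := zorn_subset_nonempty {Z | IsAcyclicAt O e Z}
    (fun c hc hchain hne ↦
      ⟨⋃₀ c, IsAcyclicAt.sUnion hfin hne hchain hc, fun _ ↦ subset_sUnion_of_mem⟩) Z hZ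
  exact ⟨Z', hZ'⟩

theorem exists_circuit_neg_of_maximal (hZ : Maximal (IsAcyclicAt O e) Z) (hx : x ∉ Z)
    (hxe : x ≠ e) : ∃ C ∈ O, C e = 1 ∧ C x < 0 ∧ ∀ y ∉ Z, y ≠ x → 0 ≤ C y := by
  have hins : ¬ IsAcyclicAt O e (insert x Z) := fun h ↦
    hx (hZ.le_of_ge h (subset_insert x Z) (mem_insert x Z))
  obtain ⟨C, hC, hCe, hCpos⟩ : ∃ C ∈ O, C e = 1 ∧ ∀ y ∉ insert x Z, 0 ≤ C y := by
    by_contra! h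
    exact hins ⟨by simp [hxe.symm, hZ.prop.notMem], h⟩
  have hCpos' : ∀ y ∉ Z, y ≠ x → 0 ≤ C y := fun y hy hyx ↦ hCpos y (by simp [hy, hyx])
  obtain ⟨y, hy, hCy⟩ := hZ.prop.exists_neg C hC hCe
  obtain rfl : y = x := by_contra fun hyx ↦ (hCpos' y hy hyx).not_gt hCy
  exact ⟨C, hC, hCe, hCy, hCpos'⟩

theorem exists_cocircuit (hZ : IsAcyclicAt O e Z) (hor : IsOrientation M O Ostar) (he : e ∈ M.E)
    (P : Finset α) : ∃ D ∈ Ostar, D e = 1 ∧ (∀ x ∈ Z, D x = 0) ∧ ∀ x ∈ P, 0 ≤ D x := by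
  refine (hor.exists_circuit_or_cocircuit_nonneg he P hZ.notMem).resolve_left ?_
  rintro ⟨C, hC, hCe, hCpos, -⟩
  obtain ⟨x, hx, hCx⟩ := hZ.exists_neg C hC hCe
  exact (hCpos x hx).not_gt hCx

theorem exists_cocircuit_pos_of_maximal [M.Finitary] (hZ : Maximal (IsAcyclicAt O e) Z)
    (hor : IsOrientation M O Ostar) (he : e ∈ M.E) (hx : x ∉ Z) (hxe : x ≠ e) (P : Finset α) :
    ∃ D ∈ Ostar, D e = 1 ∧ (∀ z ∈ Z, D z = 0) ∧ (∀ z ∈ P, 0 ≤ D z) ∧ 0 < D x := by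
  classical
  obtain ⟨C, hC, hCe, hCx, hCpos⟩ := exists_circuit_neg_of_maximal hZ hx hxe
  have hfin := hor.finite_support hC
  obtain ⟨D, hD, hDe, hDZ, hDpos⟩ := hZ.prop.exists_cocircuit hor he (P ∪ hfin.toFinset)
  simp only [Finset.mem_union, Finite.mem_toFinset, mem_support] at hDpos
  refine ⟨D, hD, hDe, hDZ, fun z hz ↦ hDpos z (.inl hz), ?_⟩
  refine pos_of_mul_neg_right (hor.mul_neg_of_forall_ne_nonneg hC hD (e := e) (by simp [hCe, hDe])
    fun z hzx ↦ ?_) hCx.le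
  by_cases hz : z ∈ Z
  · simp [hDZ z hz]
  by_cases hCz : C z = 0
  · simp [hCz]
  exact mul_nonneg (hCpos z hz hzx) (hDpos z (.inr hCz))

theorem circuit_eq_zero_of_maximal [M.Finitary] (hZ : Maximal (IsAcyclicAt O e) Z)
    (hor : IsOrientation M O Ostar) (hbin : IsBinaryOrientation O Ostar) (he : e ∈ M.E)
    (hxe : x ≠ e) {C : α → ℤ} (hC : C ∈ O) (hCe : C e = 1) (hCpos : ∀ y ∉ Z, y ≠ x → 0 ≤ C y)
    {y : α} (hy : y ∉ Z) (hyx : y ≠ x) (hye : y ≠ e) : C y = 0 := by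
  classical
  by_contra hCy
  have hfin := hor.finite_support hC
  obtain ⟨D, hD, hDe, hDZ, hDpos, hDy⟩ :=
    exists_cocircuit_pos_of_maximal hZ hor he hy hye hfin.toFinset
  simp only [Finite.mem_toFinset, mem_support] at hDpos
  have hCDy : 0 < C y * D y := mul_pos ((hCpos y hy hyx).lt_of_ne' hCy) hDy
  have hCDx : -1 ≤ C x * D x := by
    rcases hor.circuit_signature.signed C hC |>.eq_neg_one_or_eq_zero_or_eq_one x with h | h | h <;>
    rcases hor.cocircuit_signature.signed D hD |>.eq_neg_one_or_eq_zero_or_eq_one x with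
      h' | h' | h' <;> simp [h, h']
  have hsum : ∑ z ∈ {e, x, y}, C z * D z ≤ ∑ᶠ z, C z * D z := by
    refine sum_le_finsum_of_nonneg_of_notMem (hfin.subset (support_mul_subset_left C D)) ?_
    intro z hz
    simp only [Finset.mem_insert, Finset.mem_singleton, not_or] at hz
    by_cases hzZ : z ∈ Z
    · simp [hDZ z hzZ]
    by_cases hCz : C z = 0
    · simp [hCz]
    exact mul_nonneg (hCpos z hzZ hz.2.1) (hDpos z hCz)
  rw [hbin C hC D hD, Finset.sum_insert (by simp [hxe.symm, hye.symm]), Finset.sum_pair hyx.symm,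
    hCe, hDe] at hsum
  omega

theorem exists_isPositive_cocircuit_of_maximal [M.Finitary] (hZ : Maximal (IsAcyclicAt O e) Z)
    (hor : IsOrientation M O Ostar) (hbin : IsBinaryOrientation O Ostar) (he : e ∈ M.E) :
    ∃ D ∈ Ostar, IsPositive D ∧ e ∈ support D := by
  obtain ⟨D, hD, hDe, hDZ⟩ := hZ.prop.exists_cocircuit hor he ∅
  refine ⟨D, hD, fun x hDx ↦ ?_, by simp [hDe]⟩
  rcases eq_or_ne x e with rfl | hxe
  · exact hDe
  have hxZ : x ∉ Z := fun h ↦ hDx (hDZ.1 x h)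
  obtain ⟨C, hC, hCe, hCx, hCpos⟩ := exists_circuit_neg_of_maximal hZ hxZ hxe
  have hCDx : C x * D x < 0 := by
    refine hor.mul_neg_of_forall_ne_nonneg hC hD (e := e) (by simp [hCe, hDe]) fun y hyx ↦ ?_
    rcases eq_or_ne y e with rfl | hye
    · simp [hCe, hDe]
    by_cases hy : y ∈ Z
    · simp [hDZ.1 y hy]
    · simp [circuit_eq_zero_of_maximal hZ hor hbin he hxe hC hCe hCpos hy hyx hye]
  have hDpos : 0 < D x := pos_of_mul_neg_right hCDx hCx.le
  exact (hor.cocircuit_signature.signed D hD x hDx).resolve_right (by omega)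

end IsAcyclicAt

/-- Farkas' lemma for finitary binary oriented matroids. -/
theorem mem_positive_circuit_of_balanced_general (M : Matroid α) [M.Finitary]
    (O Ostar : Set (α → ℤ))
    (hor : IsOrientation M O Ostar) (hbin : IsBinaryOrientation O Ostar) {e : α} (he : e ∈ M.E)
    (hcoc : ∀ D ∈ Ostar, IsPositive D → e ∉ support D) :
    ∃ C ∈ O, IsPositive C ∧ e ∈ support C := by
  by_contra! hcirc
  have hacyc : IsAcyclicAt O e ∅ := by
    refine ⟨notMem_empty e, fun C hC hCe ↦ ?_⟩
    by_contra! hCpos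
    refine hcirc C hC (fun x hx ↦ ?_) (by simp [hCe])
    have := hCpos x (notMem_empty x)
    exact (hor.circuit_signature.signed C hC x hx).resolve_right (by omega)
  obtain ⟨Z, hZ⟩ := hacyc.exists_maximal fun C hC ↦ hor.finite_support hC
  obtain ⟨D, hD, hDpos, heD⟩ :=
    IsAcyclicAt.exists_isPositive_cocircuit_of_maximal hZ hor hbin he
  exact hcoc D hD hDpos heD

/-- In a finitary binary balanced oriented matroid, every ground-set element is
contained in (the domain of) a positive signed circuit. -/
theorem mem_positive_circuit_of_balanced (M : Matroid α) [M.Finitary]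
    (O Ostar : Set (α → ℤ))
    (hor : IsOrientation M O Ostar) (hbin : IsBinaryOrientation O Ostar)
    (hbal : IsBalanced Ostar) :
    ∀ e ∈ M.E, ∃ C ∈ O, IsPositive C ∧ e ∈ Function.support C :=
  fun _ he ↦ mem_positive_circuit_of_balanced_general M O Ostar hor hbin he
    fun _ hD hpos heD ↦ hbal.not_isPositive hD heD hpos
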